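/- There exists a constant C > 0 such that for every j ∈ {1, …, n} and every r > 0 one has |v_j′(r)| ≤ C/(1 + r), where v_j′ denotes the derivative of v_j. -/

import Mathlib

open Matrix MeasureTheory

lemma exists_norm_ringInverse_le {R : Type*} [NormedRing R] [NormedAlgebra ℝ R] [CompleteSpace R]
    {M : ℝ → R} (hM : Continuous M) (hunit : ∀ r, 0 ≤ r → IsUnit (M r)) {K : ℝ}
    (hK : ∀ r, ‖M r - (r / 2) • (1 : R)‖ ≤ K) :
    ∃ C > (0 : ℝ), ∀ r, 0 ≤ r → ‖Ring.inverse (M r)‖ ≤ C / (1 + r) := by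
  have hK0 : 0 ≤ K := (norm_nonneg _).trans (hK 0)
  have hcont : ContinuousOn (fun r => Ring.inverse (M r)) (Set.Icc 0 (4 * K + 1)) := by
    intro r hr
    obtain ⟨u, hu⟩ := hunit r hr.1
    have h : ContinuousAt Ring.inverse (M r) := hu ▸ NormedRing.inverse_continuousAt u
    exact (h.comp hM.continuousAt).continuousWithinAt
  obtain ⟨B, hB⟩ := isCompact_Icc.exists_bound_of_continuousOn hcont
  have hB0 : 0 ≤ B := (norm_nonneg _).trans (hB 0 ⟨le_rfl, by positivity⟩)
  refine ⟨(4 * K + 2) * B + 8 * ‖(1 : R)‖ + 1, by positivity, fun r hr => ?_⟩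
  rw [le_div_iff₀ (by positivity)]
  rcases le_total r (4 * K + 1) with h | h
  · have := hB r ⟨hr, h⟩
    have h1 : ‖Ring.inverse (M r)‖ * (1 + r) ≤ B * (4 * K + 2) :=
      mul_le_mul this (by linarith) (by positivity) hB0
    linarith [norm_nonneg (1 : R)]
  · have key : (r / 2) • Ring.inverse (M r)
        = 1 - Ring.inverse (M r) * (M r - (r / 2) • (1 : R)) := by
      rw [mul_sub, Ring.inverse_mul_cancel _ (hunit r hr), mul_smul_comm, mul_one]
      abel
    have h1 : r / 2 * ‖Ring.inverse (M r)‖ ≤ ‖(1 : R)‖ + ‖Ring.inverse (M r)‖ * K := by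
      calc r / 2 * ‖Ring.inverse (M r)‖ = ‖(r / 2) • Ring.inverse (M r)‖ := by
            rw [norm_smul, Real.norm_of_nonneg (by positivity)]
        _ ≤ ‖(1 : R)‖ + ‖Ring.inverse (M r) * (M r - (r / 2) • (1 : R))‖ := by
            rw [key]; exact norm_sub_le _ _
        _ ≤ _ := by gcongr; exact (norm_mul_le _ _).trans (by gcongr; exact hK r)
    have : 0 ≤ (4 * K + 2) * B := by positivity
    nlinarith [norm_nonneg (Ring.inverse (M r))]

lemma hasDerivAt_ringInverse_comp {R : Type*} [NormedRing R] [NormedAlgebra ℝ R] [CompleteSpace R]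
    {M : ℝ → R} {M' : R} {r : ℝ} (hM : HasDerivAt M M' r) (hunit : IsUnit (M r)) :
    HasDerivAt (fun t => Ring.inverse (M t))
      (-(Ring.inverse (M r) * M' * Ring.inverse (M r))) r := by
  obtain ⟨u, hu⟩ := hunit
  have h := hasFDerivAt_ringInverse (𝕜 := ℝ) u
  rw [hu] at h
  refine (h.comp_hasDerivAt r hM).congr_deriv ?_
  simp [← hu]

lemma abs_integral_cos_mul_le {c : ℝ} (hc : c ≠ 0) (r : ℝ) :
    |∫ ρ in (0 : ℝ)..r, Real.cos (c * ρ)| ≤ |c|⁻¹ := by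
  rw [intervalIntegral.integral_comp_mul_left _ hc, integral_cos, smul_eq_mul, abs_mul, abs_inv]
  simpa using mul_le_mul_of_nonneg_left (Real.abs_sin_le_one (c * r)) (by positivity : 0 ≤ |c|⁻¹)

lemma integral_sin_mul_sin (α β r : ℝ) :
    ∫ ρ in (0 : ℝ)..r, Real.sin (α * ρ) * Real.sin (β * ρ)
      = ((∫ ρ in (0 : ℝ)..r, Real.cos ((α - β) * ρ))
        - ∫ ρ in (0 : ℝ)..r, Real.cos ((α + β) * ρ)) / 2 := by
  rw [← intervalIntegral.integral_sub (Continuous.intervalIntegrable (by fun_prop) _ _)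
    (Continuous.intervalIntegrable (by fun_prop) _ _), ← intervalIntegral.integral_div]
  congr 1 with ρ
  rw [sub_mul, add_mul, Real.cos_sub, Real.cos_add]
  ring

attribute [local instance] Matrix.linftyOpNormedRing Matrix.linftyOpNormedAlgebra

lemma Matrix.hasDerivAt_iff_entry {n : ℕ} {M : ℝ → Matrix (Fin n) (Fin n) ℂ}
    {M' : Matrix (Fin n) (Fin n) ℂ} {r : ℝ} :
    HasDerivAt M M' r ↔ ∀ i j, HasDerivAt (fun t => M t i j) (M' i j) r :=
  hasDerivAt_pi.trans (forall_congr' fun _ => hasDerivAt_pi)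

lemma Matrix.linfty_opNorm_le_of_entry_le {n : ℕ} {M : Matrix (Fin n) (Fin n) ℂ}
    {K : ℝ} (hK : 0 ≤ K) (h : ∀ i j, ‖M i j‖ ≤ K) : ‖M‖ ≤ n * K := by
  lift K to NNReal using hK
  rw [linfty_opNorm_def, ← NNReal.coe_natCast, ← NNReal.coe_mul, NNReal.coe_le_coe]
  refine Finset.sup_le fun i _ => ?_
  simpa using Finset.sum_le_card_nsmul Finset.univ _ K fun j _ => h i j

lemma Matrix.norm_entry_le_linfty_opNorm {n : ℕ} (M : Matrix (Fin n) (Fin n) ℂ) (i j : Fin n) :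
    ‖M i j‖ ≤ ‖M‖ := by
  rw [linfty_opNorm_def, ← coe_nnnorm, NNReal.coe_le_coe]
  exact (Finset.single_le_sum (f := fun j => ‖M i j‖₊) (fun _ _ => zero_le)
    (Finset.mem_univ j)).trans
    (Finset.le_sup (f := fun i => ∑ j, ‖M i j‖₊) (Finset.mem_univ i))

lemma exists_abs_integral_sin_mul_sin_sub_le {n : ℕ} {μ : Fin n → ℝ} (hμpos : ∀ i, 0 < μ i)
    (hμ : Function.Injective μ) (i j : Fin n) :
    ∃ K : ℝ, ∀ r, |(∫ ρ in (0 : ℝ)..r, Real.sin (μ i * ρ) * Real.sin (μ j * ρ))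
      - r / 2 * (1 : Matrix (Fin n) (Fin n) ℝ) i j| ≤ K := by
  refine ⟨|μ i - μ j|⁻¹ + |μ i + μ j|⁻¹, fun r => ?_⟩
  have hadd := abs_le.1 (abs_integral_cos_mul_le (add_pos (hμpos i) (hμpos j)).ne' r)
  rw [integral_sin_mul_sin, abs_le]
  rcases eq_or_ne i j with rfl | hij
  · simp only [sub_self, zero_mul, Real.cos_zero, intervalIntegral.integral_const, smul_eq_mul,
      mul_one, sub_zero, one_apply_eq, abs_zero, _root_.inv_zero, zero_add]
    constructor <;> linarith
  · have hsub := abs_le.1 (abs_integral_cos_mul_le (sub_ne_zero.2 (hμ.ne hij)) r)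
    simp only [one_apply_ne hij, mul_zero, sub_zero]
    constructor <;> linarith

/-- the bound `|v_j'(r)| ≤ C/(1+r)` for `r > 0`. -/
theorem stmt_9 (n : ℕ) (hn : 1 ≤ n) (μ : Fin n → ℝ)
    (hμpos : ∀ i, 0 < μ i) (hμanti : StrictAnti μ)
    (G : ℝ → Matrix (Fin n) (Fin n) ℂ)
    (hG : ∀ (r : ℝ) (i j : Fin n),
      G r i j = ((∫ ρ in (0:ℝ)..r, Real.sin (μ i * ρ) * Real.sin (μ j * ρ) : ℝ) : ℂ))
    (a : Fin n → ℂ) (ha : ∀ j, a j ≠ 0 ∧ 0 ≤ (a j).re) (hinv : ∀ r : ℝ, 0 ≤ r → IsUnit (Matrix.diagonal a + G r))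
    (s : ℝ → Fin n → ℂ) (hs : ∀ (r : ℝ) (i : Fin n), s r i = ((Real.sin (μ i * r) : ℝ) : ℂ))
    (v : ℝ → Fin n → ℂ) (hv : ∀ r : ℝ, v r = -((Matrix.diagonal a + G r)⁻¹ *ᵥ s r)) :
    ∃ C > (0:ℝ), ∀ (j : Fin n), ∀ r : ℝ, 0 < r →
      ‖deriv (fun t : ℝ => v t j) r‖ ≤ C / (1 + r) := by
  set M : ℝ → Matrix (Fin n) (Fin n) ℂ := fun r => Matrix.diagonal a + G r with hMdef
  set S : ℝ → Matrix (Fin n) (Fin n) ℂ := fun r => Matrix.vecMulVec (s r) (s r) with hSdef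
  have hsnorm : ∀ r i, ‖s r i‖ ≤ 1 := fun r i => by
    rw [hs, Complex.norm_real]; exact Real.abs_sin_le_one _
  have hM : ∀ r, HasDerivAt M (S r) r := fun r => by
    refine Matrix.hasDerivAt_iff_entry.2 fun i j => ?_
    have hint : HasDerivAt (fun t => ∫ ρ in (0:ℝ)..t, Real.sin (μ i * ρ) * Real.sin (μ j * ρ))
        (Real.sin (μ i * r) * Real.sin (μ j * r)) r :=
      intervalIntegral.integral_hasDerivAt_right (Continuous.intervalIntegrable (by fun_prop) _ _)
        (Continuous.stronglyMeasurableAtFilter (by fun_prop) _ _)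
        (Continuous.continuousAt (by fun_prop))
    simpa [hMdef, hSdef, hG, hs, Matrix.vecMulVec_apply] using
      hint.ofReal_comp.const_add (Matrix.diagonal a i j)
  choose K hK using exists_abs_integral_sin_mul_sin_sub_le hμpos hμanti.injective
  have hKnonneg : ∀ i j, 0 ≤ K i j := fun i j => (abs_nonneg _).trans (hK i j 0)
  have hKsum : ∀ r, ‖M r - (r / 2) • (1 : Matrix (Fin n) (Fin n) ℂ)‖
      ≤ ‖Matrix.diagonal a‖ + n * ∑ i, ∑ j, K i j := fun r => by
    rw [hMdef, add_sub_assoc]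
    refine (norm_add_le _ _).trans (add_le_add_right ?_ _)
    refine Matrix.linfty_opNorm_le_of_entry_le
      (Finset.sum_nonneg fun i _ => Finset.sum_nonneg fun j _ => hKnonneg i j) fun i j => ?_
    have hentry : (G r - (r / 2) • (1 : Matrix (Fin n) (Fin n) ℂ)) i j
        = (((∫ ρ in (0:ℝ)..r, Real.sin (μ i * ρ) * Real.sin (μ j * ρ))
          - r / 2 * (1 : Matrix (Fin n) (Fin n) ℝ) i j : ℝ) : ℂ) := by
      rw [Matrix.sub_apply, Matrix.smul_apply, hG, Complex.ofReal_sub]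
      rcases eq_or_ne i j with rfl | hij
      · simp
      · simp [hij]
    rw [hentry, Complex.norm_real]
    exact (hK i j r).trans <|
      (Finset.single_le_sum (fun j _ => hKnonneg i j) (Finset.mem_univ j)).trans
      (Finset.single_le_sum (f := fun i => ∑ j, K i j)
        (fun i _ => Finset.sum_nonneg fun j _ => hKnonneg i j) (Finset.mem_univ i))
  obtain ⟨C, hC, hbound⟩ := exists_norm_ringInverse_le
    (continuous_iff_continuousAt.2 fun r => (hM r).continuousAt) hinv hKsum
  set N : ℝ → Matrix (Fin n) (Fin n) ℂ := fun r => Ring.inverse (M r)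
  obtain ⟨B, hB⟩ : ∃ B, ∀ k, μ k ≤ B := (Set.finite_range μ).bddAbove.imp fun B h k => h ⟨k, rfl⟩
  have hB0 : 0 ≤ B := (hμpos ⟨0, hn⟩).le.trans (hB _)
  refine ⟨n * (C * n * C + C * B) + 1, by positivity, fun j r hr => ?_⟩
  have hNr : ‖N r‖ ≤ C / (1 + r) := hbound r hr.le
  have hS : ‖S r‖ ≤ n := by
    refine (Matrix.linfty_opNorm_le_of_entry_le zero_le_one fun i k => ?_).trans (mul_one _).le
    change ‖s r i * s r k‖ ≤ 1
    rw [norm_mul]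
    exact mul_le_one₀ (hsnorm r i) (norm_nonneg _) (hsnorm r k)
  have hN := Matrix.hasDerivAt_iff_entry.1 (hasDerivAt_ringInverse_comp (hM r) (hinv r hr.le))
  have hs' : ∀ k, HasDerivAt (fun t => s t k) ((Real.cos (μ k * r) * μ k : ℝ) : ℂ) r := fun k => by
    simp only [hs]
    have h : HasDerivAt (fun t => Real.sin (μ k * t)) (Real.cos (μ k * r) * μ k) r := by
      simpa using ((hasDerivAt_id r).const_mul (μ k)).sin
    exact h.ofReal_comp
  have hvj : (fun t => v t j) = fun t => -∑ k, N t j k * s t k := by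
    funext t
    rw [hv, Matrix.nonsing_inv_eq_ringInverse]
    rfl
  have hderiv : HasDerivAt (fun t => v t j) (-∑ k, ((-(N r * S r * N r)) j k * s r k
      + N r j k * ((Real.cos (μ k * r) * μ k : ℝ) : ℂ))) r :=
    hvj ▸ (HasDerivAt.fun_sum fun k _ => (hN j k).mul (hs' k)).fun_neg
  rw [hderiv.deriv, norm_neg]
  have hterm : ∀ k, ‖(-(N r * S r * N r)) j k * s r k
      + N r j k * ((Real.cos (μ k * r) * μ k : ℝ) : ℂ)‖ ≤ (C * n * C + C * B) / (1 + r) :=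
    fun k => by
    have hNle : ‖N r‖ ≤ C := hNr.trans (div_le_self hC.le (by linarith))
    have h1 : ‖(-(N r * S r * N r)) j k‖ ≤ C * n * (C / (1 + r)) := by
      refine (Matrix.norm_entry_le_linfty_opNorm _ j k).trans ?_
      rw [norm_neg]
      refine (norm_mul_le _ _).trans (mul_le_mul ?_ hNr (norm_nonneg _) (by positivity))
      exact (norm_mul_le _ _).trans (mul_le_mul hNle hS (norm_nonneg _) hC.le)
    have h2 : ‖((Real.cos (μ k * r) * μ k : ℝ) : ℂ)‖ ≤ B := by
      rw [Complex.norm_real, norm_mul, Real.norm_of_nonneg (hμpos k).le]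
      exact (mul_le_of_le_one_left (hμpos k).le (Real.abs_cos_le_one _)).trans (hB k)
    calc _ ≤ ‖(-(N r * S r * N r)) j k‖ * ‖s r k‖
          + ‖N r j k‖ * ‖((Real.cos (μ k * r) * μ k : ℝ) : ℂ)‖ := by
          rw [← norm_mul, ← norm_mul]; exact norm_add_le _ _
      _ ≤ C * n * (C / (1 + r)) * 1 + C / (1 + r) * B := by
          refine add_le_add (mul_le_mul h1 (hsnorm r k) (norm_nonneg _) (by positivity)) ?_
          exact mul_le_mul ((Matrix.norm_entry_le_linfty_opNorm _ j k).trans hNr) h2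
            (norm_nonneg _) (by positivity)
      _ = _ := by ring
  calc _ ≤ ∑ _k : Fin n, (C * n * C + C * B) / (1 + r) := norm_sum_le_of_le _ fun k _ => hterm k
    _ = n * (C * n * C + C * B) / (1 + r) := by simp [mul_div_assoc]
    _ ≤ _ := by gcongr; linarith
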